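/- Let Ω be a nonempty preconnected open subset of ℂ^d and let g : ℂ^d → (Fin N → ℂ) be a map that is analytic on Ω. Let U be a nonempty open subset of Ω. Then the vanishing ideal of g(U) equals the vanishing ideal of g(Ω): for every multivariate polynomial p ∈ ℂ[X₁, …, X_N], p vanishes at every point of g(U) if and only if p vanishes at every point of g(Ω). In particular, the Zariski closures of g(U) and of g(Ω) in ℂ^N coincide. -/

import Mathlib

section IdentityPrinciple

open MvPolynomial Set Topology

variable {𝕜 E σ : Type*} [NontriviallyNormedField 𝕜] [NormedAddCommGroup E] [NormedSpace 𝕜 E]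
  {Ω U : Set E}

theorem eqOn_aeval_zero_of_preconnected_of_eventuallyEq_zero {A B : Type*} [CommSemiring A]
    [NormedCommRing B] [NormedAlgebra 𝕜 B] [Algebra A B] {g : E → σ → B}
    (hΩ : IsPreconnected Ω) (hg : ∀ i, AnalyticOnNhd 𝕜 (g · i) Ω) {z : E} (hz : z ∈ Ω)
    {p : MvPolynomial σ A} (hp : (fun x ↦ aeval (g x) p) =ᶠ[𝓝 z] 0) :
    EqOn (fun x ↦ aeval (g x) p) 0 Ω :=
  (AnalyticOnNhd.aeval_mvPolynomial hg p).eqOn_zero_of_preconnected_of_eventuallyEq_zero hΩ hz hp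

variable {k K : Type*} [Field k] [NormedField K] [NormedAlgebra 𝕜 K] [Algebra k K]
  {g : E → σ → K}

theorem vanishingIdeal_image_le_of_mem_nhds (hΩ : IsPreconnected Ω)
    (hg : ∀ i, AnalyticOnNhd 𝕜 (g · i) Ω) {z : E} (hz : z ∈ Ω) (hU : U ∈ 𝓝 z) :
    vanishingIdeal k (g '' U) ≤ vanishingIdeal k (g '' Ω) := by
  rintro p hp _ ⟨x, hx, rfl⟩
  have p_vanishes_near_z : (fun w ↦ aeval (g w) p) =ᶠ[𝓝 z] 0 := by
    filter_upwards [hU] with w hw using hp (g w) (mem_image_of_mem g hw)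
  exact eqOn_aeval_zero_of_preconnected_of_eventuallyEq_zero hΩ hg hz p_vanishes_near_z hx

theorem stmt_7_general (hΩ : IsPreconnected Ω) (hg : ∀ i, AnalyticOnNhd 𝕜 (g · i) Ω)
    (hU : (interior U).Nonempty) (hUΩ : U ⊆ Ω) :
    vanishingIdeal k (g '' U) = vanishingIdeal k (g '' Ω) := by
  obtain ⟨z, hz⟩ := hU
  exact le_antisymm
    (vanishingIdeal_image_le_of_mem_nhds hΩ hg (hUΩ (interior_subset hz))
      (mem_interior_iff_mem_nhds.mp hz))
    (vanishingIdeal_anti_mono (image_mono hUΩ))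

end IdentityPrinciple

/-- Identity principle for Zariski closures: if `g` is analytic on a nonempty preconnected
open set `Ω ⊆ ℂ^d` and `U ⊆ Ω` is nonempty open, then a polynomial vanishes on `g(U)` iff it
vanishes on `g(Ω)`; in particular `g(U)` and `g(Ω)` have the same Zariski closure. -/
theorem stmt_7 {d N : ℕ} (Ω : Set (Fin d → ℂ)) (hΩne : Ω.Nonempty)
    (hΩconn : IsPreconnected Ω) (hΩopen : IsOpen Ω)
    (g : (Fin d → ℂ) → (Fin N → ℂ)) (hg : AnalyticOnNhd ℂ g Ω)
    (U : Set (Fin d → ℂ)) (hUne : U.Nonempty) (hUopen : IsOpen U) (hUΩ : U ⊆ Ω) :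
    ∀ p : MvPolynomial (Fin N) ℂ,
      (∀ y ∈ g '' U, MvPolynomial.eval y p = 0) ↔ (∀ y ∈ g '' Ω, MvPolynomial.eval y p = 0) := by
  have hU : (interior U).Nonempty := by rwa [hUopen.interior_eq]
  have vanishingIdeal_eq :
      MvPolynomial.vanishingIdeal ℂ (g '' U) = MvPolynomial.vanishingIdeal ℂ (g '' Ω) :=
    stmt_7_general hΩconn (analyticOnNhd_pi_iff.mp hg) hU hUΩ
  exact SetLike.ext_iff.mp vanishingIdeal_eq
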